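/- Let 0 < q ≤ 1 and k ≥ 1. For every integer r with 1 ≤ r ≤ k, if y_n = q^{rn} [n choose k−r]_q for n ≥ 0, then (Δ_{q,k} y)_n = 0 for all n ≥ k. -/

import Mathlib

/-- `[n]_q = 1 + q + ⋯ + q^{n-1}`. -/
noncomputable def qnum (q : ℝ) (n : ℕ) : ℝ := ∑ i ∈ Finset.range n, q ^ i

/-- `[n]_q! = [1]_q [2]_q ⋯ [n]_q`. -/
noncomputable def qfact (q : ℝ) (n : ℕ) : ℝ := ∏ i ∈ Finset.range n, qnum q (i + 1)

/-- q-binomial coefficient `[n choose k]_q`, with the convention that it is `0` for `k > n`. -/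
noncomputable def qbinom (q : ℝ) (n k : ℕ) : ℝ :=
  if k ≤ n then qfact q n / (qfact q (n - k) * qfact q k) else 0

/-- `(Δ_{q,k} y)_n = ∑_{j=0}^k (-1)^j [k choose j]_q q^{j(j+1)/2} y_{n-j}`. -/
noncomputable def deltaOp (q : ℝ) (k : ℕ) (y : ℕ → ℝ) (n : ℕ) : ℝ :=
  ∑ j ∈ Finset.range (k + 1), (-1 : ℝ) ^ j * qbinom q k j * q ^ (j * (j + 1) / 2) * y (n - j)

/-!
With `S` the shift `(S y)_n = y_{n-1}`, the `q`-binomial theorem reads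
`Δ_{q,k} = (1 - q S)(1 - q² S) ⋯ (1 - q^k S)`. The factor `1 - q^k S` turns
`q^{rn} [n choose k-r]_q` into `q^{rn} [n-1 choose k-1-r]_q`, by the `q`-Pascal rule. Peeling
off factors from the top one down to `1 - q^{r+1} S` leaves `q^{rn}`, which `1 - q^r S` kills.
-/

section

variable {q : ℝ}

theorem qnum_add (q : ℝ) (m n : ℕ) : qnum q (m + n) = qnum q m + q ^ m * qnum q n := by
  simp only [qnum, Finset.sum_range_add, Finset.mul_sum, pow_add]

theorem qnum_succ_ne_zero (hq : q ≠ -1) (n : ℕ) : qnum q (n + 1) ≠ 0 :=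
  geom_sum_ne_zero hq n.succ_ne_zero

theorem qfact_succ (q : ℝ) (n : ℕ) : qfact q (n + 1) = qfact q n * qnum q (n + 1) :=
  Finset.prod_range_succ _ n

theorem qfact_ne_zero (hq : q ≠ -1) (n : ℕ) : qfact q n ≠ 0 :=
  Finset.prod_ne_zero_iff.mpr fun i _ => qnum_succ_ne_zero hq i

theorem qbinom_eq_zero_of_lt (q : ℝ) {n k : ℕ} (h : n < k) : qbinom q n k = 0 :=
  if_neg h.not_ge

theorem qbinom_add_right (q : ℝ) (m k : ℕ) :
    qbinom q (m + k) k = qfact q (m + k) / (qfact q m * qfact q k) := by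
  rw [qbinom, if_pos (Nat.le_add_left k m), Nat.add_sub_cancel]

theorem qbinom_symm (q : ℝ) {n k : ℕ} (h : k ≤ n) : qbinom q n (n - k) = qbinom q n k := by
  rw [qbinom, qbinom, if_pos (Nat.sub_le n k), if_pos h, Nat.sub_sub_self h, mul_comm]

theorem qbinom_self (hq : q ≠ -1) (n : ℕ) : qbinom q n n = 1 := by
  have h := qfact_ne_zero hq n
  rw [qbinom, if_pos le_rfl, Nat.sub_self, show qfact q 0 = 1 from Finset.prod_range_zero _,
    one_mul, div_self h]

theorem qbinom_zero_right (hq : q ≠ -1) (n : ℕ) : qbinom q n 0 = 1 := by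
  rw [← qbinom_symm q n.zero_le, Nat.sub_zero, qbinom_self hq]

theorem qbinom_succ_succ (hq : q ≠ -1) (n k : ℕ) :
    qbinom q (n + 1) (k + 1) = qbinom q n k + q ^ (k + 1) * qbinom q n (k + 1) := by
  rcases lt_trichotomy n k with h | rfl | h
  · simp only [qbinom_eq_zero_of_lt q h, qbinom_eq_zero_of_lt q (Nat.lt_succ_of_lt h),
      qbinom_eq_zero_of_lt q (Nat.succ_lt_succ h), mul_zero, add_zero]
  · rw [qbinom_self hq, qbinom_self hq, qbinom_eq_zero_of_lt q n.lt_succ_self, mul_zero, add_zero]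
  · obtain ⟨m, rfl⟩ : ∃ m, n = m + 1 + k := ⟨n - (k + 1), by omega⟩
    have split_top : qnum q (m + 1 + k + 1) = qnum q (k + 1) + q ^ (k + 1) * qnum q (m + 1) := by
      rw [← qnum_add]; congr 1; omega
    have upper := qbinom_add_right q (m + 1) (k + 1)
    have lower := qbinom_add_right q m (k + 1)
    rw [show m + (k + 1) = m + 1 + k by omega] at lower
    rw [← add_assoc] at upper
    rw [upper, lower, qbinom_add_right, qfact_succ q (m + 1 + k), split_top, qfact_succ q m,
      qfact_succ q k]
    have hm := qfact_ne_zero hq m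
    have hk := qfact_ne_zero hq k
    have hm' := qnum_succ_ne_zero hq m
    have hk' := qnum_succ_ne_zero hq k
    field_simp

theorem qbinom_succ_succ' (hq : q ≠ -1) {n k : ℕ} (h : k ≤ n) :
    qbinom q (n + 1) (k + 1) = qbinom q n (k + 1) + q ^ (n - k) * qbinom q n k := by
  rcases h.eq_or_lt with rfl | h
  · simp only [qbinom_self hq, qbinom_eq_zero_of_lt q k.lt_succ_self, Nat.sub_self, pow_zero,
      mul_one, zero_add]
  · obtain ⟨i, hi⟩ : ∃ i, n - k = i + 1 := ⟨n - k - 1, by omega⟩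
    rw [← qbinom_symm q (Nat.add_le_add_right h.le 1), ← qbinom_symm q h, ← qbinom_symm q h.le,
      Nat.add_sub_add_right, show n - (k + 1) = i by omega, hi, qbinom_succ_succ hq]

theorem deltaOp_const_mul (q : ℝ) (k : ℕ) (c : ℝ) (y : ℕ → ℝ) (n : ℕ) :
    deltaOp q k (fun m => c * y m) n = c * deltaOp q k y n := by
  simp only [deltaOp, Finset.mul_sum, mul_left_comm]

/-- The coefficient of `y_{n-j}` in `(Δ_{q,k} y)_n`, that is, the coefficient of `x^j` in
`(1 - q x)(1 - q² x) ⋯ (1 - q^k x)`; naming it isolates the recursion in `k`. -/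
noncomputable def deltaCoeff (q : ℝ) (k j : ℕ) : ℝ :=
  (-1) ^ j * qbinom q k j * q ^ (j * (j + 1) / 2)

theorem deltaOp_eq_sum (q : ℝ) (k : ℕ) (y : ℕ → ℝ) (n : ℕ) :
    deltaOp q k y n = ∑ j ∈ Finset.range (k + 1), deltaCoeff q k j * y (n - j) :=
  rfl

theorem deltaCoeff_zero_right (hq : q ≠ -1) (k : ℕ) : deltaCoeff q k 0 = 1 := by
  simp only [deltaCoeff, qbinom_zero_right hq, zero_mul, Nat.zero_div, pow_zero, mul_one]

theorem deltaCoeff_eq_zero_of_lt (q : ℝ) {k j : ℕ} (h : k < j) : deltaCoeff q k j = 0 := by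
  rw [deltaCoeff, qbinom_eq_zero_of_lt q h, mul_zero, zero_mul]

theorem deltaCoeff_succ_succ (hq : q ≠ -1) {k j : ℕ} (hj : j ≤ k) :
    deltaCoeff q (k + 1) (j + 1) = deltaCoeff q k (j + 1) - q ^ (k + 1) * deltaCoeff q k j := by
  have triangular : (j + 1) * (j + 1 + 1) / 2 = j * (j + 1) / 2 + (j + 1) := by
    rw [show (j + 1) * (j + 1 + 1) = j * (j + 1) + (j + 1) * 2 by ring]
    exact Nat.add_mul_div_right _ _ two_pos
  have split_exponent : k + 1 = (k - j) + (j + 1) := by omega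
  simp only [deltaCoeff]
  rw [qbinom_succ_succ' hq hj, triangular, split_exponent]
  ring

theorem deltaOp_succ_succ (hq : q ≠ -1) (k : ℕ) (y : ℕ → ℝ) (n : ℕ) :
    deltaOp q (k + 1) y (n + 1) = deltaOp q k y (n + 1) - q ^ (k + 1) * deltaOp q k y n := by
  have extend : deltaOp q k y (n + 1) =
      ∑ j ∈ Finset.range (k + 1 + 1), deltaCoeff q k j * y (n + 1 - j) := by
    rw [Finset.sum_range_succ, deltaCoeff_eq_zero_of_lt q k.lt_succ_self, zero_mul, add_zero,
      deltaOp_eq_sum]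
  rw [extend, deltaOp_eq_sum, deltaOp_eq_sum, Finset.sum_range_succ' _ (k + 1),
    Finset.sum_range_succ' _ (k + 1), deltaCoeff_zero_right hq, deltaCoeff_zero_right hq,
    Finset.mul_sum, add_sub_right_comm, ← Finset.sum_sub_distrib]
  congr 1
  refine Finset.sum_congr rfl fun j hj => ?_
  rw [deltaCoeff_succ_succ hq (Finset.mem_range_succ_iff.mp hj), Nat.add_sub_add_right]
  ring

theorem deltaOp_succ_eq_deltaOp_sub (hq : q ≠ -1) {k n : ℕ} (hkn : k ≤ n) (y : ℕ → ℝ) :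
    deltaOp q (k + 1) y (n + 1) = deltaOp q k (fun m => y (m + 1) - q ^ (k + 1) * y m) n := by
  rw [deltaOp_succ_succ hq]
  simp only [deltaOp_eq_sum, Finset.mul_sum, ← Finset.sum_sub_distrib]
  refine Finset.sum_congr rfl fun j hj => ?_
  rw [Nat.sub_add_comm ((Finset.mem_range_succ_iff.mp hj).trans hkn)]
  ring

theorem deltaOp_pow_eq_zero (hq : q ≠ -1) {r n : ℕ} (hr : 1 ≤ r) (hrn : r ≤ n) :
    deltaOp q r (fun m => q ^ (r * m)) n = 0 := by
  obtain ⟨k, rfl⟩ := Nat.exists_eq_add_of_le' hr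
  obtain ⟨n, rfl⟩ := Nat.exists_eq_add_of_le' (hr.trans hrn)
  have annihilate (m : ℕ) : q ^ ((k + 1) * (m + 1)) - q ^ (k + 1) * q ^ ((k + 1) * m) = 0 := by
    ring
  rw [deltaOp_succ_eq_deltaOp_sub hq (Nat.le_of_succ_le_succ hrn)]
  simp only [annihilate, deltaOp, mul_zero, Finset.sum_const_zero]

theorem deltaOp_succ_pow_mul_qbinom_succ (hq : q ≠ -1) (r s : ℕ) {n : ℕ} (hn : s + r ≤ n) :
    deltaOp q (s + r + 1) (fun m => q ^ (r * m) * qbinom q m (s + 1)) (n + 1) =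
      q ^ r * deltaOp q (s + r) (fun m => q ^ (r * m) * qbinom q m s) n := by
  have lower (m : ℕ) : q ^ (r * (m + 1)) * qbinom q (m + 1) (s + 1) -
      q ^ (s + r + 1) * (q ^ (r * m) * qbinom q m (s + 1)) =
        q ^ r * (q ^ (r * m) * qbinom q m s) := by
    rw [qbinom_succ_succ hq]
    ring
  rw [deltaOp_succ_eq_deltaOp_sub hq hn, ← deltaOp_const_mul]
  simp only [lower]

end

theorem stmt7_general {q : ℝ} (hq : q ≠ -1) {k r n : ℕ} (hr : 1 ≤ r) (hrk : r ≤ k)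
    (hkn : k ≤ n) :
    deltaOp q k (fun m => q ^ (r * m) * qbinom q m (k - r)) n = 0 := by
  obtain ⟨s, rfl⟩ := Nat.exists_eq_add_of_le' hrk
  rw [Nat.add_sub_cancel]
  clear hrk
  induction s generalizing n with
  | zero =>
    simp only [qbinom_zero_right hq, mul_one, Nat.zero_add] at hkn ⊢
    exact deltaOp_pow_eq_zero hq hr hkn
  | succ s ih =>
    rw [Nat.add_right_comm] at hkn ⊢
    obtain ⟨n, rfl⟩ := Nat.exists_eq_add_of_le' (Nat.le_of_add_left_le hkn)
    have hn : s + r ≤ n := Nat.le_of_succ_le_succ hkn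
    rw [deltaOp_succ_pow_mul_qbinom_succ hq r s hn, ih hn, mul_zero]

/-- for `0 < q ≤ 1`, `k ≥ 1` and `1 ≤ r ≤ k`, if `y_n = q^{rn} [n choose k-r]_q`
then `(Δ_{q,k} y)_n = 0` for all `n ≥ k`. -/
theorem stmt7 (q : ℝ) (hq0 : 0 < q) (hq1 : q ≤ 1) (k : ℕ) (hk : 1 ≤ k) :
    ∀ r : ℕ, 1 ≤ r → r ≤ k →
      ∀ n : ℕ, k ≤ n → deltaOp q k (fun m => q ^ (r * m) * qbinom q m (k - r)) n = 0 := by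
  intro r hr hrk n hn
  exact stmt7_general (by linarith) hr hrk hn
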